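/- arXiv:2510.26248 — 3 statements merged into one kernel-verified Lean document; each statement's English description precedes it below -/
import Mathlib

section
/- Let U ⊆ ℂ be a nonempty connected open set and let W₁, …, Wₙ : U → ℂ be pairwise distinct holomorphic functions each satisfying Kepler's equation Wᵢ(ζ) − sin(Wᵢ(ζ)) = ζ for all ζ ∈ U. Then W₁, …, Wₙ are algebraically independent over ℂ(z): for every nonzero polynomial P ∈ ℂ[X₀, X₁, …, Xₙ], the holomorphic function ζ ↦ P(ζ, W₁(ζ), …, Wₙ(ζ)) is not identically zero on U. -/
open Complex

/-!
Put `tᵢ = exp (I Wᵢ)`. Kepler's equation gives `Wᵢ = ζ + (tᵢ - tᵢ⁻¹) / (2 I)`, so it suffices that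
`ζ, t₁, …, tₙ` are algebraically independent over `ℂ`, and differentiating it gives the autonomous
equation `(t - 1)² t' = k t²` with `k = -2 I`. The functions `tᵢ` are pairwise distinct, and
`tᵢ tⱼ ≠ 1`, since `tᵢ tⱼ = 1` forces `sin Wᵢ + sin Wⱼ = 0`, hence `2 ζ = Wᵢ + Wⱼ` and
`exp (2 I ζ) = 1` on `U`. What remains is differential algebra in the fraction field `M` of the ring
of holomorphic functions on `U`, whose derivation `D = d/dζ` has field of constants `ℂ`
(`holo.exists_field`).

Suppose that `z, t₁, …, tₘ` are independent and that another solution `y` of the same equation is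
algebraic over `ℂ(z, t₁, …, tₘ)` (`not_algebraic_of_ode`). The partial derivations `∂ⱼ = ∂/∂tⱼ` and
`∂/∂z` extend to `M` by formal étaleness (`exists_derivation`), and `[∂ⱼ, D] = ∂ⱼ(D tⱼ) ∂ⱼ` on
everything algebraic over `ℂ(z, t₁, …, tₘ)`. It follows that `∂ⱼ y · D tⱼ / D y` is annihilated by `D`
(`first_integral`), so it is a constant `c`, and `y` satisfies
`(1 - y⁻¹)² ∂ⱼ y = c (1 - tⱼ⁻¹)²`, that is
`∂ⱼ y / y - c / tⱼ = ∂ⱼ u` with `u = (y - y⁻¹ - c (tⱼ - tⱼ⁻¹)) / 2` algebraic over `F(tⱼ)`,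
where `F` is generated by the other variables.

Two facts about functions algebraic over a rational function field `F(x)` finish the proof.
* `residue_algebraic`: if `y' / y - u' = c / x`, then `c` is rational. Norm and trace reduce this to
  rational functions, where one compares residues at `0`.
* `exp_deriv_eq_zero`: if `v' = v u'`, then `v' = 0` (the exponential of a nonconstant algebraic
  function is not algebraic).

By the first one `N c = m` for integers `N > 0` and `m`; by the second one, applied to
`v = y ^ N tⱼ ^ (-m)`, which satisfies `v' = v (N u)'`, we get `tⱼ ∂ⱼ y = c y`. If `∂ⱼ y ≠ 0`, comparing
with the equation above yields `(y - tⱼ) (y tⱼ - 1) = 0`, which is excluded (`tan_ode_deriv_eq_zero`).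
So `∂ⱼ y = 0` for all `j`, and `∂y/∂z = D y` solves `(y - 1)² y' = k y²`, which has no algebraic
solution in `z`, again by `exp_deriv_eq_zero` (`ode_not_algebraic`).
-/

/-! ### Extending and killing derivations -/

/-- A derivation `A → M` extends to `M` when `M` is formally étale over `A`: then
`Ω[M⁄F] = M ⊗ Ω[A⁄F]`. -/
lemma exists_extend {F A M : Type*} [CommRing F] [CommRing A] [CommRing M] [Algebra F A]
    [Algebra F M] [Algebra A M] [IsScalarTower F A M] [Algebra.FormallyEtale A M]
    (d : Derivation F A M) : ∃ d' : Derivation F M M, ∀ a, d' (algebraMap A M a) = d a := by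
  let f : TensorProduct A M (Ω[A⁄F]) →ₗ[M] M := d.liftKaehlerDifferential.liftBaseChange M
  refine ⟨(f ∘ₗ
    (KaehlerDifferential.tensorKaehlerEquivOfFormallyEtale F A M).symm.toLinearMap).compDer
    (KaehlerDifferential.D F M), fun a => ?_⟩
  simp [f, KaehlerDifferential.tensorKaehlerEquivOfFormallyEtale_symm_D_algebraMap]

/-- A transcendental element `x` admits a derivation `d` with `d x = 1`: complete `x` to a
transcendence basis, take `∂/∂x` on the polynomial ring, and extend it along the étale map to `M`. -/
lemma exists_derivation {F M : Type*} [Field F] [Field M] [CharZero F] [Algebra F M] {x : M}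
    (hx : Transcendental F x) : ∃ d : Derivation F M M, d x = 1 := by
  classical
  have hs : AlgebraicIndepOn F id ({x} : Set M) :=
    (algebraicIndependent_singleton_iff (x := fun i : ({x} : Set M) => (i : M)) ⟨x, rfl⟩).2 hx
  obtain ⟨T, hT, hb⟩ := exists_isTranscendenceBasis_superset hs
  let A := MvPolynomial T F
  let φ : A →ₐ[F] M := MvPolynomial.aeval ((↑) : T → M)
  have hφ : Function.Injective φ := hb.1
  let : Algebra A M := φ.toAlgebra
  have : IsScalarTower F A M := IsScalarTower.of_algebraMap_eq' φ.comp_algebraMap.symm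
  let Q := FractionRing A
  have : FaithfulSMul A M := (faithfulSMul_iff_algebraMap_injective A M).2 hφ
  let : Algebra Q M := FractionRing.liftAlgebra A M
  have : IsScalarTower A Q M := FractionRing.isScalarTower_liftAlgebra A M
  have : Algebra.IsAlgebraic Q M := by
    have := hb.isAlgebraic
    have : Algebra.IsAlgebraic A M :=
      Algebra.IsAlgebraic.of_ringHom_of_comp_eq hb.1.aevalEquiv (RingHom.id M)
        hb.1.aevalEquiv.surjective Function.injective_id
        (RingHom.ext fun p => hb.1.algebraMap_aevalEquiv p)
    exact (IsFractionRing.comap_isAlgebraic_iff (A := A) (K := Q)).1 this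
  have : CharZero A := inferInstance
  have : CharZero Q := inferInstance
  have : Algebra.FormallyEtale A Q := Algebra.FormallyEtale.of_isLocalization (nonZeroDivisors A)
  have : Algebra.FormallyEtale Q M := Algebra.FormallyEtale.of_isSeparable _ _
  have : Algebra.FormallyEtale A M := Algebra.FormallyEtale.comp A Q M
  obtain ⟨d, hd⟩ := exists_extend (MvPolynomial.mkDerivation F
    (fun i : T => if (i : M) = x then (1 : M) else 0) : Derivation F A M)
  refine ⟨d, ?_⟩
  have := hd (MvPolynomial.X ⟨x, hT rfl⟩)
  rw [MvPolynomial.mkDerivation_X] at this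
  have h2 : algebraMap A M (MvPolynomial.X ⟨x, hT rfl⟩) = x := by
    change φ _ = _
    exact MvPolynomial.aeval_X _ _
  rw [h2] at this
  simpa using this

lemma deriv_eq_zero_of_algebraic {F M : Type*} [Field F] [Field M] [CharZero F] [Algebra F M]
    (d : Derivation F M M) {y : M} (hy : IsAlgebraic F y) : d y = 0 := by
  have h := d.map_aeval (minpoly F y) y
  rw [minpoly.aeval, map_zero, smul_eq_mul] at h
  exact (mul_eq_zero.1 h.symm).resolve_left
    ((minpoly.irreducible hy.isIntegral).separable.aeval_derivative_ne_zero (minpoly.aeval F y))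

/-- The field of constants of a derivation, as an intermediate field. -/
def constField {F M : Type*} [Field F] [Field M] [Algebra F M] (d : Derivation F M M) :
    IntermediateField F M where
  carrier := {x | d x = 0}
  mul_mem' {a b} ha hb := by
    simp only [Set.mem_ofPred_eq] at *
    simp [ha, hb]
  add_mem' {a b} ha hb := by
    simp only [Set.mem_ofPred_eq] at *
    simp [ha, hb]
  algebraMap_mem' r := by simp
  inv_mem' x hx := by
    simp only [Set.mem_ofPred_eq] at *
    simp [Derivation.leibniz_inv, hx]

/-- The derivation `d` regarded as linear over its own field of constants. -/
def constDer {F M : Type*} [Field F] [Field M] [Algebra F M] (d : Derivation F M M) :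
    Derivation (constField d) M M :=
  Derivation.mk'
    { toFun := d
      map_add' := map_add d
      map_smul' := by
        intro c x
        have hc : d (c : M) = 0 := c.2
        simp [Algebra.smul_def, IntermediateField.algebraMap_apply, hc] }
    fun a b => d.leibniz a b

lemma isAlgebraic_mono {F M : Type*} [Field F] [Field M] [Algebra F M]
    {K L : IntermediateField F M} (h : K ≤ L) {y : M} (hy : IsAlgebraic K y) : IsAlgebraic L y :=
  IsAlgebraic.ringHom_of_comp_eq (IntermediateField.inclusion h) (RingHom.id M) hy
    (IntermediateField.inclusion h).injective rfl

/-- A derivation that vanishes on `T` vanishes on everything algebraic over `F(T)`. -/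
lemma deriv_eq_zero_of_adjoin {F M : Type*} [Field F] [Field M] [CharZero F] [Algebra F M]
    (d : Derivation F M M) {T : Set M} (hT : ∀ t ∈ T, d t = 0) {y : M}
    (hy : IsAlgebraic (IntermediateField.adjoin F T) y) : d y = 0 := by
  have h : IntermediateField.adjoin F T ≤ constField d :=
    IntermediateField.adjoin_le_iff.2 fun t ht => hT t ht
  exact deriv_eq_zero_of_algebraic (constDer d) (isAlgebraic_mono h hy)

/-! ### Norm and trace of a logarithmic relation -/

section
open Differential

/-- Applying the norm to `y` and the trace to `u` turns a relation `y' / y - u' = e` with `e` in the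
base field into a relation of the same form inside the base field, with `e` multiplied by the
degree. -/
lemma norm_trace_galois {K L : Type*} [Field K] [Field L] [CharZero K] [Differential K]
    [Differential L] [Algebra K L] [DifferentialAlgebra K L] [FiniteDimensional K L] [IsGalois K L]
    {y u : L} (hy : y ≠ 0) {e : K} (h : logDeriv y - u′ = algebraMap K L e) :
    ∃ N : ℕ, 0 < N ∧ ∃ R : K, R ≠ 0 ∧ ∃ T : K, logDeriv R - T′ = N * e := by
  classical
  have ffb : IntermediateField.fixedField (⊤ : Subgroup (L ≃ₐ[K] L)) = ⊥ :=
    (IsGalois.tfae.out 0 1).mp (inferInstance : IsGalois K L)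
  have h1 : (∏ σ : L ≃ₐ[K] L, σ y) ∈ IntermediateField.fixedField (⊤ : Subgroup (L ≃ₐ[K] L)) := by
    rintro ⟨e, _⟩
    change e _ = _
    rw [map_prod]
    exact Fintype.prod_equiv (Equiv.mulLeft e) _ _ (by simp)
  have h2 : (∑ σ : L ≃ₐ[K] L, σ u) ∈ IntermediateField.fixedField (⊤ : Subgroup (L ≃ₐ[K] L)) := by
    rintro ⟨e, _⟩
    change e _ = _
    rw [map_sum]
    exact Fintype.sum_equiv (Equiv.mulLeft e) _ _ (by simp)
  rw [ffb, IntermediateField.mem_bot] at h1 h2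
  obtain ⟨R, hR⟩ := h1
  obtain ⟨T, hT⟩ := h2
  refine ⟨Fintype.card (L ≃ₐ[K] L), Fintype.card_pos, R, ?_, T, ?_⟩
  · rintro rfl
    rw [map_zero] at hR
    exact Finset.prod_ne_zero_iff.2 (fun σ _ => by simpa using hy) hR.symm
  · apply FaithfulSMul.algebraMap_injective K L
    rw [map_sub, ← Differential.logDeriv_algebraMap, ← deriv_algebraMap, hR, hT, map_sum,
      Differential.logDeriv_prod,
      ← Finset.sum_sub_distrib]
    · have : ∀ σ : L ≃ₐ[K] L, logDeriv (σ y) - (σ u)′ = algebraMap K L e := by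
        intro σ
        have := congrArg σ h
        rw [AlgEquiv.commutes, map_sub] at this
        rw [← this, algEquiv_deriv']
        simp [Differential.logDeriv, algEquiv_deriv']
      simp [this]
    · intro σ _
      simpa using hy

/-- The version of `norm_trace_galois` for a finite extension, obtained by passing to the normal
closure. -/
lemma norm_trace {K E : Type*} [Field K] [Field E] [CharZero K] [Differential K]
    [Differential E] [Algebra K E] [DifferentialAlgebra K E] [FiniteDimensional K E]
    {y u : E} (hy : y ≠ 0) {e : K} (h : logDeriv y - u′ = algebraMap K E e) :
    ∃ N : ℕ, 0 < N ∧ ∃ R : K, R ≠ 0 ∧ ∃ T : K, logDeriv R - T′ = N * e := by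
  let L := IntermediateField.normalClosure K E (AlgebraicClosure E)
  have : FiniteDimensional K L := inferInstance
  have : IsGalois K L := ⟨⟩
  let f : E →ₐ[K] L := Algebra.algHom K E L
  refine norm_trace_galois (L := L) (y := f y) (u := f u) (e := e) (by simpa using hy) ?_
  have := congrArg f h
  rw [AlgHom.commutes, map_sub] at this
  rw [← this, algHom_deriv' _ f.injective]
  simp [Differential.logDeriv, algHom_deriv' _ f.injective]

end

/-! ### Residues -/

section
open Polynomial

lemma exists_eq_X_pow_mul {F : Type*} [Field F] {a : F[X]} (ha : a ≠ 0) :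
    ∃ (i : ℕ) (a₁ : F[X]), a = X ^ i * a₁ ∧ a₁.eval 0 ≠ 0 := by
  obtain ⟨q, h1, h2⟩ := exists_eq_pow_rootMultiplicity_mul_and_not_dvd a ha 0
  rw [C_0, sub_zero] at h1 h2
  refine ⟨_, q, h1, fun h => h2 ?_⟩
  rwa [X_dvd_iff, coeff_zero_eq_eval_zero]

/-- The Euler operator `X d/dX` does not lower the order of vanishing at `0`. -/
lemma X_mul_derivative {F : Type*} [Field F] (i : ℕ) (a : F[X]) :
    X * derivative (X ^ i * a) = X ^ i * (C (i : F) * a + X * derivative a) := by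
  rw [derivative_mul, derivative_X_pow]
  cases i with
  | zero => simp
  | succ i =>
    rw [Nat.add_sub_cancel]
    ring

/-- If `(a / b)' / (a / b) - (p / q)' = c / X` for polynomials `a, b, p, q` (denominators cleared),
then `c` is an integer: the residue at `0` of a logarithmic derivative is an integer, and that of an
exact derivative is zero. -/
lemma residue_integer {F : Type*} [Field F] [CharZero F] {a b p q : F[X]} (ha : a ≠ 0)
    (hb : b ≠ 0) (hq : q ≠ 0) {c : F}
    (h : X * ((derivative a * b - a * derivative b) * q ^ 2
      - (derivative p * q - p * derivative q) * (a * b)) = C c * (a * b * q ^ 2)) :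
    ∃ m : ℤ, c = m := by
  obtain ⟨i, a, rfl, ha₀⟩ := exists_eq_X_pow_mul ha
  obtain ⟨j, b, rfl, hb₀⟩ := exists_eq_X_pow_mul hb
  obtain ⟨l, q, rfl, hq₀⟩ := exists_eq_X_pow_mul hq
  by_contra hc
  have hc : (i : F) - j - c ≠ 0 := fun h0 => hc ⟨(i : ℤ) - j, by
    push_cast
    linear_combination -h0⟩
  -- `A` collects the logarithmic terms with the powers of `X` removed; its constant term is
  -- `i - j - c` times a nonzero factor.
  let A : F[X] := ((C (i : F) * a + X * derivative a) * b
    - a * (C (j : F) * b + X * derivative b) - C c * (a * b)) * q ^ 2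
  have hA : A.eval 0 = ((i : F) - j - c) * (a.eval 0 * b.eval 0 * q.eval 0 ^ 2) := by
    simp [A]; ring
  have hA0 : A.eval 0 ≠ 0 := by
    rw [hA]
    exact mul_ne_zero hc (mul_ne_zero (mul_ne_zero ha₀ hb₀) (pow_ne_zero 2 hq₀))
  by_cases hp : p = 0
  · have : X ^ (i + j + 2 * l) * A = 0 := by
      rw [hp, derivative_zero] at h
      simp only [A]
      linear_combination h - (X ^ j * b) * (X ^ l * q) ^ 2 * X_mul_derivative i a
        + (X ^ i * a) * (X ^ l * q) ^ 2 * X_mul_derivative j b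
    have : A = 0 := (mul_eq_zero.1 this).resolve_left (pow_ne_zero _ X_ne_zero)
    exact hA0 (by rw [this, eval_zero])
  obtain ⟨k, p, rfl, hp₀⟩ := exists_eq_X_pow_mul hp
  -- `B` is the corresponding expression for `(p / q)'`; its constant term vanishes when `k = l`.
  -- Comparing orders of vanishing in `X ^ l * A = X ^ k * B` gives a contradiction in each case.
  let B : F[X] := ((C (k : F) * p + X * derivative p) * q
    - p * (C (l : F) * q + X * derivative q)) * (a * b)
  have hB : B.eval 0 = ((k : F) - l) * (p.eval 0 * q.eval 0 * (a.eval 0 * b.eval 0)) := by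
    simp [B]; ring
  have key : X ^ (i + j + l) * (X ^ l * A) = X ^ (i + j + l) * (X ^ k * B) := by
    simp only [A, B]
    linear_combination h - (X ^ j * b) * (X ^ l * q) ^ 2 * X_mul_derivative i a
        + (X ^ i * a) * (X ^ l * q) ^ 2 * X_mul_derivative j b
        + (X ^ l * q) * (X ^ i * a) * (X ^ j * b) * X_mul_derivative k p
        - (X ^ k * p) * (X ^ i * a) * (X ^ j * b) * X_mul_derivative l q
  have key := mul_left_cancel₀ (pow_ne_zero _ X_ne_zero) key
  rcases lt_trichotomy k l with hkl | hkl | hkl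
  · obtain ⟨n, rfl⟩ := Nat.exists_eq_add_of_lt hkl
    have : X ^ k * (X ^ (n + 1) * A) = X ^ k * B := by rw [← key]; ring
    have := congrArg (eval 0) (mul_left_cancel₀ (pow_ne_zero _ X_ne_zero) this)
    rw [hB] at this
    simp only [eval_mul, eval_pow, eval_X, ne_eq, Nat.succ_ne_zero, not_false_eq_true, zero_pow,
      zero_mul] at this
    refine mul_ne_zero ?_ (mul_ne_zero (mul_ne_zero hp₀ hq₀) (mul_ne_zero ha₀ hb₀)) this.symm
    rw [sub_ne_zero]
    exact_mod_cast hkl.ne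
  · subst hkl
    have := mul_left_cancel₀ (pow_ne_zero _ X_ne_zero) key
    rw [this, hB] at hA0
    simp at hA0
  · obtain ⟨n, rfl⟩ := Nat.exists_eq_add_of_lt hkl
    have : X ^ l * A = X ^ l * (X ^ (n + 1) * B) := by rw [key]; ring
    have := mul_left_cancel₀ (pow_ne_zero _ X_ne_zero) this
    rw [this] at hA0
    simp at hA0

/-- The element `x` is automatically transcendental over `F`, so `residue_integer` applies to
elements of `F(x)`. -/
lemma residue_rational {F M : Type*} [Field F] [Field M] [CharZero F] [Algebra F M]
    (d : Derivation F M M) {x : M} (hx : d x = 1) {R T : M} (hR : R ∈ IntermediateField.adjoin F {x})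
    (hT : T ∈ IntermediateField.adjoin F {x}) (hR0 : R ≠ 0) {c : F}
    (h : d R / R - d T = algebraMap F M c / x) : ∃ m : ℤ, c = m := by
  have htr : Transcendental F x := fun hx' => by
    rw [deriv_eq_zero_of_algebraic d hx'] at hx
    exact zero_ne_one hx
  have hinj := transcendental_iff_injective.1 htr
  obtain ⟨a, b, rfl⟩ := (IntermediateField.mem_adjoin_simple_iff F R).1 hR
  obtain ⟨p, q, rfl⟩ := (IntermediateField.mem_adjoin_simple_iff F T).1 hT
  have hx0 : x ≠ 0 := by rintro rfl; simp at hx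
  have hd : ∀ f : F[X], d (aeval x f) = aeval x (derivative f) := fun f => by
    rw [d.map_aeval, hx, smul_eq_mul, mul_one]
  have ha : aeval x a ≠ 0 := fun h => hR0 (by rw [h, zero_div])
  have hb : aeval x b ≠ 0 := fun h => hR0 (by rw [h, div_zero])
  -- A zero denominator stands for `T = 0`, by the convention for division.
  by_cases hq : aeval x q = 0
  · refine residue_integer (a := a) (b := b) (p := 0) (q := 1) ?_ ?_ one_ne_zero ?_
    · rintro rfl; simp at ha
    · rintro rfl; simp at hb
    · apply hinj
      rw [hq] at h
      simp only [Derivation.leibniz_div, hd, smul_eq_mul, div_zero, map_zero, sub_zero] at h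
      field_simp at h
      simp only [map_mul, map_sub, map_pow, aeval_X, aeval_C, derivative_one, map_zero,
        map_one]
      linear_combination h
  · refine residue_integer (a := a) (b := b) (p := p) (q := q) ?_ ?_ ?_ ?_
    · rintro rfl; simp at ha
    · rintro rfl; simp at hb
    · rintro rfl; simp at hq
    · apply hinj
      simp only [Derivation.leibniz_div, hd, smul_eq_mul] at h
      field_simp at h
      simp only [map_mul, map_sub, map_pow, aeval_X, aeval_C]
      linear_combination h

end

/-- For `y`, `u` algebraic over `F(x)`, a relation `y' / y - u' = c / x` forces `c` to be rational. -/
lemma residue_algebraic {F M : Type*} [Field F] [Field M] [CharZero F] [Algebra F M]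
    (d : Derivation F M M) {x : M} (hx : d x = 1) {y u : M} (hy : y ≠ 0)
    (hya : IsAlgebraic (IntermediateField.adjoin F {x}) y)
    (hua : IsAlgebraic (IntermediateField.adjoin F {x}) u) {c : F}
    (h : d y / y - d u = algebraMap F M c / x) : ∃ N : ℕ, 0 < N ∧ ∃ m : ℤ, (N : F) * c = m := by
  have hmem : ∀ r ∈ IntermediateField.adjoin F {x}, d r ∈ IntermediateField.adjoin F {x} := by
    intro r hr
    have hd : ∀ f : Polynomial F, d (Polynomial.aeval x f) = Polynomial.aeval x f.derivative :=
      fun f => by rw [d.map_aeval, hx, smul_eq_mul, mul_one]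
    obtain ⟨p, q, rfl⟩ := (IntermediateField.mem_adjoin_simple_iff F r).1 hr
    have hp : ∀ f : Polynomial F, Polynomial.aeval x f ∈ IntermediateField.adjoin F {x} :=
      fun f => (IntermediateField.mem_adjoin_simple_iff F _).2 ⟨f, 1, by simp⟩
    rw [Derivation.leibniz_div, hd, hd, smul_eq_mul, smul_eq_mul, smul_eq_mul]
    exact mul_mem (pow_mem (inv_mem (hp q)) _) (sub_mem (mul_mem (hp q) (hp _)) (mul_mem (hp p) (hp _)))
  let K := IntermediateField.adjoin F {x}
  have : CharZero K := charZero_of_injective_algebraMap (algebraMap F K).injective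
  let dK : Derivation ℤ K K := Derivation.mk'
    { toFun := fun r => ⟨d r, hmem r r.2⟩
      map_add' := by intro r s; ext; simp
      map_smul' := by intro r s; ext; simp }
    (by intro r s; ext; simp)
  let : Differential K := ⟨dK⟩
  let : Differential M := ⟨d.restrictScalars ℤ⟩
  have : DifferentialAlgebra K M := ⟨fun r => rfl⟩
  -- `M` is a differential extension of `K = F(x)`, and so is its finite subextension `E`.
  let E := IntermediateField.adjoin K {y, u}
  have : FiniteDimensional K E := IntermediateField.finiteDimensional_adjoin (by
    rintro z (rfl | rfl)
    · exact hya.isIntegral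
    · exact hua.isIntegral)
  have hyE : y ∈ E := IntermediateField.subset_adjoin _ _ (by simp)
  have huE : u ∈ E := IntermediateField.subset_adjoin _ _ (by simp)
  let e : K := algebraMap F K c / ⟨x, IntermediateField.mem_adjoin_simple_self F x⟩
  have hdE : ∀ z : E, ((Differential.deriv z : E) : M) = d z := fun z =>
    (deriv_algebraMap (A := E) (B := M) z).symm
  obtain ⟨N, hN, R, hR, T, hRT⟩ := norm_trace (K := K) (E := E) (y := ⟨y, hyE⟩) (u := ⟨u, huE⟩)
    (e := e) (fun h => hy (congrArg Subtype.val h)) (by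
      apply Subtype.ext
      refine Eq.trans ?_ h
      change ((Differential.deriv (⟨y, hyE⟩ : E) : E) : M) / y
        - ((Differential.deriv (⟨u, huE⟩ : E) : E) : M) = _
      rw [hdE, hdE])
  obtain ⟨m, hm⟩ := residue_rational d hx R.2 T.2 (fun h => hR (Subtype.ext h)) (c := N * c) (by
    refine (congrArg (Subtype.val : K → M) hRT).trans ?_
    simp [e, mul_div_assoc])
  exact ⟨N, hN, m, hm⟩

/-- If `u` and `v` are algebraic over `F(x)` and `v` is transcendental, then `u` is algebraic over
`F(v)`. -/
lemma exchange {F M : Type*} [Field F] [Field M] [Algebra F M] {x u v : M}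
    (hv : Transcendental F v) (hvx : IsAlgebraic (IntermediateField.adjoin F {x}) v)
    (hux : IsAlgebraic (IntermediateField.adjoin F {x}) u) :
    IsAlgebraic (IntermediateField.adjoin F {v}) u := by
  have key : ∀ (s : Set M) (z : M), IsAlgebraic (IntermediateField.adjoin F s) z ↔
      z ∈ (AlgebraicIndependent.matroid F M).closure s := fun s z => by
    rw [AlgebraicIndependent.matroid_closure_eq, IntermediateField.isAlgebraic_adjoin_iff]
    rfl
  rw [key] at hvx hux ⊢
  have h0 : v ∉ (AlgebraicIndependent.matroid F M).closure ∅ := by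
    rw [← key, IntermediateField.isAlgebraic_adjoin_iff, Algebra.adjoin_empty]
    exact fun h => hv (Subalgebra.isAlgebraic_of_isAlgebraic_bot h)
  rw [← insert_empty_eq x] at hvx hux
  have hx := Matroid.mem_closure_insert h0 hvx
  rw [← insert_empty_eq v]
  refine Matroid.closure_subset_closure_of_subset_closure ?_ hux
  rintro z (rfl | hz)
  · exact hx
  · exact hz.elim

/-- The exponential of a nonconstant algebraic function is not algebraic. If `v' ≠ 0`, the derivation
`d / d v` satisfies `v ↦ 1`, `u ↦ 1 / v`, and then `residue_algebraic` would make `s = √-1` rational. -/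
lemma exp_deriv_eq_zero {F M : Type*} [Field F] [Field M] [CharZero F] [Algebra F M]
    (d : Derivation F M M) {s : F} (hs : s ^ 2 = -1) {x u v : M} (hv0 : v ≠ 0)
    (hvx : IsAlgebraic (IntermediateField.adjoin F {x}) v)
    (hux : IsAlgebraic (IntermediateField.adjoin F {x}) u) (h : d v = v * d u) : d v = 0 := by
  by_contra hne
  have htr : Transcendental F v := fun h => hne (deriv_eq_zero_of_algebraic d h)
  obtain ⟨N, hN, m, hm⟩ := residue_algebraic ((d v)⁻¹ • d) (x := v) (y := 1)
    (u := algebraMap F M (-s) * u) (c := s)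
    (by simp [hne]) one_ne_zero isAlgebraic_one
    ((isAlgebraic_algebraMap (R := IntermediateField.adjoin F {v}) (A := M)
      (algebraMap F _ (-s))).mul (exchange htr hvx hux)) (by
        rw [h] at hne ⊢
        have : d u ≠ 0 := right_ne_zero_of_mul hne
        simp
        field_simp)
  -- `N s = m` and `s ^ 2 = -1` give `m ^ 2 + N ^ 2 = 0`.
  have h2 : ((m ^ 2 + N ^ 2 : ℤ) : F) = 0 := by
    push_cast
    rw [← hm]
    linear_combination (N : F) ^ 2 * hs
  have h3 : (m ^ 2 + N ^ 2 : ℤ) = 0 := by exact_mod_cast h2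
  have : (0 : ℤ) < N ^ 2 := by positivity
  nlinarith [sq_nonneg m]

/-! ### Algebraic solutions of the differential equation -/

/-- Splits the adjunction of `T` into that of `T'` followed by that of `t`. -/
lemma isAlgebraic_two_step {F M : Type*} [Field F] [Field M] [Algebra F M] {T T' : Set M} {t y : M}
    (hT : T ⊆ insert t T') (hy : IsAlgebraic (IntermediateField.adjoin F T) y) :
    IsAlgebraic (IntermediateField.adjoin (IntermediateField.adjoin F T') {t}) y := by
  let L := IntermediateField.adjoin (IntermediateField.adjoin F T') {t}
  have h : IntermediateField.adjoin F T ≤ L.restrictScalars F := by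
    refine IntermediateField.adjoin_le_iff.2 fun z hz => ?_
    rcases hT hz with rfl | hz
    · exact IntermediateField.mem_adjoin_simple_self _ z
    · exact L.algebraMap_mem ⟨z, IntermediateField.subset_adjoin F T' hz⟩
  exact isAlgebraic_mono h hy

/-- The solutions of `(1 - y⁻¹)² dy = c (1 - t⁻¹)² dt` that are algebraic over `F(t)` are constant,
apart from `y = t` and `y = t⁻¹`. -/
lemma tan_ode_deriv_eq_zero {F M : Type*} [Field F] [Field M] [CharZero F] [Algebra F M]
    (d : Derivation F M M) {s : F} (hs : s ^ 2 = -1) {t y : M} (ht : d t = 1)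
    (hyt : IsAlgebraic (IntermediateField.adjoin F {t}) y) (hy : y ≠ 0) {c : F}
    (h : (y - 1) ^ 2 * d y * t ^ 2 = algebraMap F M c * y ^ 2 * (t - 1) ^ 2)
    (h1 : y ≠ t) (h2 : y * t ≠ 1) : d y = 0 := by
  by_contra hdy
  have : CharZero M := charZero_of_injective_algebraMap (algebraMap F M).injective
  have ht0 : t ≠ 0 := by rintro rfl; simp at ht
  have hta : IsAlgebraic (IntermediateField.adjoin F {t}) t :=
    isAlgebraic_algebraMap (R := IntermediateField.adjoin F {t}) (A := M)
      ⟨t, IntermediateField.mem_adjoin_simple_self F t⟩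
  have hca : ∀ a : F, IsAlgebraic (IntermediateField.adjoin F {t}) (algebraMap F M a) := fun a =>
    isAlgebraic_algebraMap (R := IntermediateField.adjoin F {t}) (A := M) (algebraMap F _ a)
  -- The equation reads `d y / y - c / t = d u`.
  let u : M := algebraMap F M (1 / 2) * (y - y⁻¹ - algebraMap F M c * (t - t⁻¹))
  have hua : IsAlgebraic (IntermediateField.adjoin F {t}) u :=
    (hca _).mul ((hyt.sub hyt.inv).sub ((hca _).mul (hta.sub hta.inv)))
  have hdu : d y / y - d u = algebraMap F M c / t := by
    simp only [u, Derivation.leibniz, Derivation.leibniz_inv, map_sub, Derivation.map_algebraMap,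
      smul_eq_mul, ht]
    simp only [map_div₀, map_one, map_ofNat]
    field_simp
    linear_combination -h
  obtain ⟨N, hN, m, hm⟩ := residue_algebraic d ht hy hyt hua hdu
  have hmM : (m : M) = N * algebraMap F M c := by
    rw [← map_natCast (algebraMap F M), ← map_mul, hm, map_intCast]
  have hNM : (N : M) ≠ 0 := by exact_mod_cast hN.ne'
  let v : M := y ^ N * t ^ (-m)
  have hv0 : v ≠ 0 := mul_ne_zero (pow_ne_zero _ hy) (zpow_ne_zero _ ht0)
  have hva : IsAlgebraic (IntermediateField.adjoin F {t}) v := by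
    refine (hyt.pow N).mul ?_
    exact isAlgebraic_algebraMap (R := IntermediateField.adjoin F {t}) (A := M)
      ((⟨t, IntermediateField.mem_adjoin_simple_self F t⟩ : IntermediateField.adjoin F {t}) ^ (-m))
  have hdv : d v = v * (N * (d y / y) - m / t) := by
    simp only [v, Derivation.leibniz, Derivation.leibniz_pow, Derivation.leibniz_zpow, smul_eq_mul,
      ht, nsmul_eq_mul, zsmul_eq_mul]
    rw [zpow_sub_one₀ ht0]
    obtain ⟨N, rfl⟩ := Nat.exists_eq_succ_of_ne_zero hN.ne'
    simp only [Nat.succ_eq_add_one, Nat.add_sub_cancel]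
    push_cast
    field_simp
    ring
  have hdv0 := exp_deriv_eq_zero d hs hv0 hva ((hca N).mul hua) (by
    rw [hdv, hmM, Derivation.leibniz, Derivation.map_algebraMap, smul_zero, add_zero, smul_eq_mul,
      map_natCast]
    linear_combination v * N * hdu)
  rw [hdv, hmM, mul_eq_zero, or_iff_right hv0] at hdv0
  have h3 : d y * t = algebraMap F M c * y := by
    field_simp at hdv0
    rw [mul_zero, mul_eq_zero, or_iff_right hNM] at hdv0
    linear_combination hdv0
  have hc : algebraMap F M c ≠ 0 := fun h0 => by
    rw [h0, zero_mul, mul_eq_zero] at h3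
    tauto
  -- Substituting `t · d y = c y` into the equation leaves `t (y - 1)² = y (t - 1)²`.
  have h4 : (algebraMap F M c * y) * ((y - t) * (y * t - 1)) = 0 := by
    linear_combination h - (y - 1) ^ 2 * t * h3
  rcases mul_eq_zero.1 h4 with h5 | h5
  · exact mul_ne_zero hc hy h5
  · rcases mul_eq_zero.1 h5 with h5 | h5
    · exact h1 (sub_eq_zero.1 h5)
    · exact h2 (sub_eq_zero.1 h5)

/-- The equation `(y - 1)² y' = k y²` has no nonzero solution that is algebraic over `F(z)`: it reads
`y' = y u'` with `u = (y - y⁻¹ - k z) / 2`. -/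
lemma ode_not_algebraic {F M : Type*} [Field F] [Field M] [CharZero F] [Algebra F M]
    (d : Derivation F M M) {s : F} (hs : s ^ 2 = -1) {z y : M} (hz : d z = 1)
    (hyz : IsAlgebraic (IntermediateField.adjoin F {z}) y) (hy : y ≠ 0) {k : F} (hk : k ≠ 0)
    (h : (y - 1) ^ 2 * d y = algebraMap F M k * y ^ 2) : False := by
  have : CharZero M := charZero_of_injective_algebraMap (algebraMap F M).injective
  have hza : IsAlgebraic (IntermediateField.adjoin F {z}) z :=
    isAlgebraic_algebraMap (R := IntermediateField.adjoin F {z}) (A := M)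
      ⟨z, IntermediateField.mem_adjoin_simple_self F z⟩
  have hca : ∀ a : F, IsAlgebraic (IntermediateField.adjoin F {z}) (algebraMap F M a) := fun a =>
    isAlgebraic_algebraMap (R := IntermediateField.adjoin F {z}) (A := M) (algebraMap F _ a)
  have hdy := exp_deriv_eq_zero d hs hy hyz
    (u := algebraMap F M (1 / 2) * (y - y⁻¹ - algebraMap F M k * z))
    ((hca _).mul ((hyz.sub hyz.inv).sub ((hca _).mul hza))) (by
      simp only [Derivation.leibniz, Derivation.leibniz_inv, map_sub, Derivation.map_algebraMap,
        smul_eq_mul, hz]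
      simp only [map_div₀, map_one, map_ofNat]
      field_simp
      linear_combination -h)
  rw [hdy, mul_zero] at h
  exact mul_ne_zero ((map_ne_zero _).2 hk) (pow_ne_zero 2 hy) h.symm

/-- If `t` and `y` solve the same autonomous equation and `[d, D] y = d (D t) · d y` with `d t = 1`,
then `d y · D t / D y` is a constant of `D`. The equation expresses `D w` as a function of `w`, so
`d (D w)` and `D (D w)` are multiples of `d w` and `D w` by the same factor. -/
lemma first_integral {F M : Type*} [Field F] [Field M] [Algebra F M]
    (D d : Derivation F M M) {k : F} (hk : k ≠ 0) {t y : M} (ht0 : t ≠ 0) (hy0 : y ≠ 0)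
    (ht : (t - 1) ^ 2 * D t = algebraMap F M k * t ^ 2)
    (hy : (y - 1) ^ 2 * D y = algebraMap F M k * y ^ 2) (hdt : d t = 1)
    (hc : d (D y) - D (d y) = d (D t) * d y) : D (d y * D t / D y) = 0 := by
  have hk' : algebraMap F M k ≠ 0 := (map_ne_zero _).2 hk
  have key : ∀ w : M, w ≠ 0 → (w - 1) ^ 2 * D w = algebraMap F M k * w ^ 2 →
      (w - 1) ≠ 0 ∧ D w ≠ 0 ∧ ∀ e : Derivation F M M,
        e (D w) = (2 * algebraMap F M k * w - 2 * (w - 1) * D w) / (w - 1) ^ 2 * e w := by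
    intro w hw0 hw
    have h0 : (w - 1) ^ 2 * D w ≠ 0 := hw ▸ mul_ne_zero hk' (pow_ne_zero 2 hw0)
    have h1 : w - 1 ≠ 0 := fun h => h0 (by rw [h]; simp)
    refine ⟨h1, right_ne_zero_of_mul h0, fun e => ?_⟩
    have := congrArg e hw
    simp only [Derivation.leibniz, Derivation.leibniz_pow, map_sub, Derivation.map_algebraMap,
      smul_eq_mul, Derivation.map_one_eq_zero, nsmul_eq_mul, Nat.cast_ofNat] at this
    field_simp
    simp only [Nat.add_one_sub_one, pow_one, mul_zero, sub_zero, add_zero] at this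
    linear_combination this
  obtain ⟨ht1, hDt, hDDt⟩ := key t ht0 ht
  obtain ⟨hy1, hDy, hDDy⟩ := key y hy0 hy
  rw [hDDt d, hDDy d, hdt] at hc
  have hc' : D (d y) = (2 * algebraMap F M k * y - 2 * (y - 1) * D y) / (y - 1) ^ 2 * d y
      - (2 * algebraMap F M k * t - 2 * (t - 1) * D t) / (t - 1) ^ 2 * 1 * d y := by
    linear_combination -hc
  rw [Derivation.leibniz_div, Derivation.leibniz]
  simp only [smul_eq_mul]
  rw [hDDt D, hDDy D, hc']
  ring

/-! ### Algebraic independence of solutions -/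

/-- Inductive step of the independence theorem. The index `o` carries the variable `z = x o`, and the
other `x j` are solutions of the equation `(x - 1)² D x = k x²`. A further solution, different from
all `x j` and `(x j)⁻¹`, is not algebraic over `ℂ(x j : j ∈ S)`. -/
lemma not_algebraic_of_ode {M J : Type*} [Field M] [Algebra ℂ M] (D : Derivation ℂ M M)
    (hconst : ∀ f, D f = 0 → ∃ c : ℂ, algebraMap ℂ M c = f) {x : J → M} {S : Finset J} {o : J}
    (hoS : o ∈ S) (hS : AlgebraicIndepOn ℂ x S) (hz : D (x o) = 1) {k : ℂ} (hk : k ≠ 0)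
    (hx0 : ∀ j ∈ S, j ≠ o → x j ≠ 0)
    (hx : ∀ j ∈ S, j ≠ o → (x j - 1) ^ 2 * D (x j) = algebraMap ℂ M k * x j ^ 2)
    {y : M} (hy0 : y ≠ 0) (hy : (y - 1) ^ 2 * D y = algebraMap ℂ M k * y ^ 2)
    (h1 : ∀ j ∈ S, j ≠ o → y ≠ x j) (h2 : ∀ j ∈ S, j ≠ o → y * x j ≠ 1) :
    ¬ IsAlgebraic (IntermediateField.adjoin ℂ (x '' S)) y := by
  classical
  intro halg
  have : CharZero M := charZero_of_injective_algebraMap (algebraMap ℂ M).injective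
  have hk' : algebraMap ℂ M k ≠ 0 := (map_ne_zero _).2 hk
  have hne1 : ∀ w : M, w ≠ 0 → (w - 1) ^ 2 * D w = algebraMap ℂ M k * w ^ 2 →
      (w - 1) ^ 2 ≠ 0 ∧ D w ≠ 0 := fun w hw0 hw => by
    have h0 : (w - 1) ^ 2 * D w ≠ 0 := hw ▸ mul_ne_zero hk' (pow_ne_zero 2 hw0)
    exact ⟨left_ne_zero_of_mul h0, right_ne_zero_of_mul h0⟩
  -- `F j` is generated by the variables other than `xⱼ`, and `δ j` is `∂/∂xⱼ`.
  let F : J → IntermediateField ℂ M := fun j => IntermediateField.adjoin ℂ (x '' (S \ {j}))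
  have hF0 : ∀ j, CharZero (F j) := fun j =>
    charZero_of_injective_algebraMap (algebraMap ℂ (F j)).injective
  have hder : ∀ j : S, ∃ d : Derivation (F j) M M, d (x j) = 1 := by
    intro j
    have h := hS
    have hins : (S : Set J) = insert (j : J) ((S : Set J) \ {(j : J)}) := by
      rw [Set.insert_sdiff_singleton, Set.insert_eq_of_mem]
      exact j.2
    rw [hins, AlgebraicIndepOn.insert_iff (by simp)] at h
    refine exists_derivation fun hj => h.2 ?_
    exact IntermediateField.isAlgebraic_adjoin_iff.1 hj
  choose δ hδ using hder
  have hδ0 : ∀ j : S, ∀ i ∈ S, i ≠ j → δ j (x i) = 0 := fun j i hi hij =>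
    (δ j).map_algebraMap (⟨x i, IntermediateField.subset_adjoin _ _ ⟨i, ⟨hi, hij⟩, rfl⟩⟩ : F j)
  have halg' : ∀ j : S, IsAlgebraic (IntermediateField.adjoin (F j) {x j}) y := fun j =>
    isAlgebraic_two_step (by
      rintro _ ⟨i, hi, rfl⟩
      by_cases hij : i = j
      · left; rw [hij]
      · right; exact ⟨i, ⟨hi, hij⟩, rfl⟩) halg
  have hI : ∀ j : S, (algebraMap ℂ (F j) Complex.I) ^ 2 = -1 := fun j => by
    rw [← map_pow, Complex.I_sq, map_neg, map_one]
  let p : S → Derivation ℂ M M := fun j => (δ j).restrictScalars ℂ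
  have hp : ∀ j z, p j z = δ j z := fun j z => rfl
  -- `y` does not depend on any variable other than `z`.
  have hstep : ∀ j : S, (j : J) ≠ o → p j y = 0 := by
    intro j hjo
    -- Both sides of `[∂ⱼ, D] = ∂ⱼ(D xⱼ) ∂ⱼ` are derivations; on each `xᵢ` with `i ≠ j` both vanish,
    -- because `D xᵢ` is a function of `xᵢ` alone.
    have hcomm : (⁅p j, D⁆ - (p j (D (x j))) • p j) y = 0 := by
      refine deriv_eq_zero_of_adjoin _ ?_ halg
      rintro _ ⟨i, hi, rfl⟩
      simp only [Derivation.coe_sub, Pi.sub_apply, Derivation.commutator_apply,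
        Derivation.coe_smul, Pi.smul_apply, smul_eq_mul, hp]
      by_cases hij : i = j
      · subst hij
        rw [hδ j, Derivation.map_one_eq_zero]
        ring
      · rw [hδ0 j i hi hij, map_zero]
        by_cases hio : i = o
        · rw [hio, hz, Derivation.map_one_eq_zero]
          ring
        · have hk0 : δ j (algebraMap ℂ M k) = 0 := (p j).map_algebraMap k
          have h3 := congrArg (p j) (hx i hi hio)
          simp only [Derivation.leibniz, Derivation.leibniz_pow, map_sub, smul_eq_mul,
            hk0, Derivation.map_one_eq_zero, nsmul_eq_mul, hp, hδ0 j i hi hij] at h3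
          have h4 : δ j (D (x i)) = 0 := by
            have : (x i - 1) ^ 2 * δ j (D (x i)) = 0 := by linear_combination h3
            exact (mul_eq_zero.1 this).resolve_left (hne1 _ (hx0 i hi hio) (hx i hi hio)).1
          rw [h4]
          ring
    simp only [Derivation.coe_sub, Pi.sub_apply, Derivation.commutator_apply,
        Derivation.coe_smul, Pi.smul_apply, smul_eq_mul] at hcomm
    have hj0 := hx0 j j.2 hjo
    have hj := hx j j.2 hjo
    obtain ⟨c, hc⟩ := hconst _ (first_integral D (p j) hk hj0 hy0 hj hy (hδ j) (sub_eq_zero.1 hcomm))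
    have hDy := (hne1 y hy0 hy).2
    rw [eq_div_iff hDy] at hc
    refine tan_ode_deriv_eq_zero (δ j) (hI j) (hδ j) (halg' j) hy0 (c := algebraMap ℂ (F j) c) ?_
      (h1 j j.2 hjo) (h2 j j.2 hjo)
    rw [← IsScalarTower.algebraMap_apply ℂ (F j) M]
    apply mul_left_cancel₀ hk'
    rw [hp] at hc
    linear_combination (-(y - 1) ^ 2 * δ j y) * hj - (y - 1) ^ 2 * (x j - 1) ^ 2 * hc
      + algebraMap ℂ M c * (x j - 1) ^ 2 * hy
  -- The chain rule `D y = ∑ⱼ D xⱼ · ∂ⱼ y` reduces to its `z`-term.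
  have hDo : D y = p ⟨o, hoS⟩ y := by
    have hsum : ∀ w, (D - ∑ j : S, D (x j) • p j) w = D w - ∑ j : S, D (x j) * p j w := fun w => by
      rw [Derivation.coe_sub, Pi.sub_apply]
      congr 1
      exact (congrArg (fun f => f w) (map_sum Derivation.coeFnAddMonoidHom
        (fun j : S => D (x j) • p j) Finset.univ)).trans (Finset.sum_apply _ _ _)
    have h3 : (D - ∑ j : S, D (x j) • p j) y = 0 := by
      refine deriv_eq_zero_of_adjoin _ ?_ halg
      rintro _ ⟨i, hi, rfl⟩
      rw [hsum, Finset.sum_eq_single_of_mem ⟨i, hi⟩ (Finset.mem_univ _), hp, hδ ⟨i, hi⟩]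
      · ring
      · intro j _ hj
        rw [hp, hδ0 j i hi fun h => hj (Subtype.ext h.symm), mul_zero]
    rw [hsum, Finset.sum_eq_single_of_mem ⟨o, hoS⟩ (Finset.mem_univ _), hz, one_mul] at h3
    · exact sub_eq_zero.1 h3
    · intro j _ hj
      rw [hstep j fun h => hj (Subtype.ext h), mul_zero]
  refine ode_not_algebraic (δ ⟨o, hoS⟩) (hI _) (hδ ⟨o, hoS⟩) (halg' _) hy0
    (k := algebraMap ℂ _ k) ((map_ne_zero _).2 hk) ?_
  rw [← IsScalarTower.algebraMap_apply ℂ _ M, ← hy, hDo, hp]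

lemma isAlgebraic_of_quadratic {C M : Type*} [Field C] [Field M] [Algebra C M] {b : C} {t : M}
    (h : t ^ 2 - algebraMap C M b * t - 1 = 0) : IsAlgebraic C t := by
  refine ⟨Polynomial.X ^ 2 - Polynomial.C b * Polynomial.X - 1, fun h0 => ?_, by simpa using h⟩
  have := congrArg (Polynomial.eval 0) h0
  simp at this

/-- Independence of `z` and the `w i`, where `t i - (t i)⁻¹ = 2 I (w i - z)` and the `t i` solve
`(t - 1)² D t = k t²`. The two families `z, t` and `z, w` are algebraic over each other. -/
lemma algebraicIndependent_of_ode {M ι : Type*} [Fintype ι] [Field M] [Algebra ℂ M]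
    (D : Derivation ℂ M M) (hconst : ∀ f, D f = 0 → ∃ c : ℂ, algebraMap ℂ M c = f)
    {z : M} (hz : D z = 1) {k : ℂ} (hk : k ≠ 0) {t w : ι → M} (ht0 : ∀ i, t i ≠ 0)
    (ht : ∀ i, (t i - 1) ^ 2 * D (t i) = algebraMap ℂ M k * t i ^ 2)
    (h1 : ∀ i j, i ≠ j → t i ≠ t j) (h2 : ∀ i j, i ≠ j → t i * t j ≠ 1)
    (hw : ∀ i, t i ^ 2 - algebraMap ℂ M (2 * Complex.I) * (w i - z) * t i - 1 = 0) :
    AlgebraicIndependent ℂ (fun o : Option ι => o.elim z w) := by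
  classical
  let T : Finset ι → Finset (Option ι) := fun S => insert none (S.map Function.Embedding.some)
  have hTi : ∀ i S, T (insert i S) = insert (some i) (T S) := fun i S => by
    simp only [T, Finset.map_insert]
    exact Finset.insert_comm _ _ _
  have hnT : ∀ i S, i ∉ S → some i ∉ (T S : Set (Option ι)) := fun i S hi => by simpa [T] using hi
  have hztr : Transcendental ℂ z := fun h => by
    have : CharZero M := charZero_of_injective_algebraMap (algebraMap ℂ M).injective
    rw [deriv_eq_zero_of_algebraic D h] at hz
    exact zero_ne_one hz
  have hbase : ∀ u : ι → M, AlgebraicIndepOn ℂ (fun o : Option ι => o.elim z u) (T ∅) := fun u => by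
    have : (T ∅ : Set (Option ι)) = {none} := by simp [T]
    rw [this]
    exact (algebraicIndependent_singleton_iff
      (x := fun i : ({none} : Set (Option ι)) => (i : Option ι).elim z u) ⟨none, rfl⟩).2 hztr
  have htS : ∀ i S, i ∉ S → AlgebraicIndepOn ℂ (fun o : Option ι => o.elim z t) (T S) →
      ¬ IsAlgebraic (IntermediateField.adjoin ℂ ((fun o : Option ι => o.elim z t) '' T S))
        (t i) := fun i S hi hS => by
    have hj : ∀ j ∈ T S, j ≠ none → ∃ l, l ∈ S ∧ j = some l := by
      intro j hj hjn
      cases j with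
      | none => exact absurd rfl hjn
      | some l => exact ⟨l, by simpa [T] using hj, rfl⟩
    refine not_algebraic_of_ode D hconst (o := none) (by simp [T]) hS hz hk ?_ ?_ (ht0 i) (ht i)
      ?_ ?_
    · intro j hj1 hj2
      obtain ⟨l, -, rfl⟩ := hj j hj1 hj2
      exact ht0 l
    · intro j hj1 hj2
      obtain ⟨l, -, rfl⟩ := hj j hj1 hj2
      exact ht l
    · intro j hj1 hj2
      obtain ⟨l, hl, rfl⟩ := hj j hj1 hj2
      exact h1 i l fun h => hi (h ▸ hl)
    · intro j hj1 hj2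
      obtain ⟨l, hl, rfl⟩ := hj j hj1 hj2
      exact h2 i l fun h => hi (h ▸ hl)
  have hindt : ∀ S, AlgebraicIndepOn ℂ (fun o : Option ι => o.elim z t) (T S) := by
    intro S
    induction S using Finset.induction_on with
    | empty => exact hbase t
    | insert i S hi ih =>
      rw [hTi, Finset.coe_insert, AlgebraicIndepOn.insert_iff (hnT i S hi)]
      refine ⟨ih, fun h => htS i S hi ih ?_⟩
      exact IntermediateField.isAlgebraic_adjoin_iff.2 h
  have hindw : ∀ S, AlgebraicIndepOn ℂ (fun o : Option ι => o.elim z w) (T S) := by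
    intro S
    induction S using Finset.induction_on with
    | empty => exact hbase w
    | insert i S hi ih =>
      rw [hTi, Finset.coe_insert, AlgebraicIndepOn.insert_iff (hnT i S hi)]
      refine ⟨ih, fun h => htS i S hi (hindt S) ?_⟩
      replace h := IntermediateField.isAlgebraic_adjoin_iff.2 h
      -- `C` is the relative algebraic closure of `ℂ(z, t l : l ∈ S)`. It contains all `w l`, so it
      -- contains `w i` and then `t i`.
      let K := IntermediateField.adjoin ℂ ((fun o : Option ι => o.elim z t) '' T S)
      have hmem : ∀ o ∈ T S, Option.elim o z t ∈ K := fun o ho =>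
        IntermediateField.subset_adjoin _ _ ⟨o, ho, rfl⟩
      let C := algebraicClosure K M
      have hKC : ∀ r ∈ K, r ∈ C := fun r hr => C.algebraMap_mem ⟨r, hr⟩
      have hzC : z ∈ C := hKC z (hmem none (by simp [T]))
      have hIC : ∀ c : ℂ, algebraMap ℂ M c ∈ C := fun c => hKC _ (K.algebraMap_mem c)
      have hle : IntermediateField.adjoin ℂ ((fun o : Option ι => o.elim z w) '' T S)
          ≤ C.restrictScalars ℂ := by
        refine IntermediateField.adjoin_le_iff.2 ?_
        rintro _ ⟨o, ho, rfl⟩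
        cases o with
        | none => exact hzC
        | some l =>
          have htl : t l ∈ C := hKC _ (hmem (some l) ho)
          have h3 : w l = z + (t l - (t l)⁻¹) / algebraMap ℂ M (2 * Complex.I) := by
            have h4 : algebraMap ℂ M (2 * Complex.I) ≠ 0 :=
              (map_ne_zero _).2 (mul_ne_zero two_ne_zero Complex.I_ne_zero)
            have := ht0 l
            field_simp
            linear_combination -hw l
          change w l ∈ C
          rw [h3]
          exact add_mem hzC (div_mem (sub_mem htl (inv_mem htl)) (hIC _))
      have hwC : IsAlgebraic C (w i) := isAlgebraic_mono hle h
      have hwK : w i ∈ C := mem_algebraicClosure_iff.2 (hwC.restrictScalars K)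
      have htC : IsAlgebraic C (t i) :=
        isAlgebraic_of_quadratic (b := (⟨_, hIC (2 * Complex.I)⟩ * (⟨w i, hwK⟩ - ⟨z, hzC⟩) : C)) (hw i)
      exact htC.restrictScalars K
  have huniv : (T Finset.univ : Set (Option ι)) = Set.univ := by
    ext o
    cases o <;> simp [T]
  have := hindw Finset.univ
  rw [huniv] at this
  exact this.comp (fun o : Option ι => (⟨o, trivial⟩ : (Set.univ : Set (Option ι))))
    fun a b h => congrArg Subtype.val h

/-! ### The differential field of quotients of holomorphic functions -/

/-- The ring of holomorphic functions on `U`. Its elements are functions on the subtype `U`, so that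
equality only tests values inside `U`. -/
def holo (U : Set ℂ) : Subalgebra ℂ (U → ℂ) where
  carrier := {f | ∃ g : ℂ → ℂ, DifferentiableOn ℂ g U ∧ ∀ ζ : U, f ζ = g ζ}
  mul_mem' := by
    rintro _ _ ⟨g, hg, hg'⟩ ⟨h, hh, hh'⟩
    exact ⟨fun ζ => g ζ * h ζ, hg.mul hh, fun ζ => by simp [hg', hh']⟩
  add_mem' := by
    rintro _ _ ⟨g, hg, hg'⟩ ⟨h, hh, hh'⟩
    exact ⟨fun ζ => g ζ + h ζ, hg.add hh, fun ζ => by simp [hg', hh']⟩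
  algebraMap_mem' c := ⟨fun _ => c, differentiableOn_const c, fun _ => rfl⟩

namespace holo

variable {U : Set ℂ}

/-- The restriction to `U` of a function that is holomorphic on `U`. -/
def of (g : ℂ → ℂ) (hg : DifferentiableOn ℂ g U) : holo U := ⟨fun ζ => g ζ, g, hg, fun _ => rfl⟩

/-- A chosen function on `ℂ` restricting to `f`; its values outside `U` carry no information. -/
noncomputable def rep (f : holo U) : ℂ → ℂ := f.2.choose

lemma rep_diff (f : holo U) : DifferentiableOn ℂ (rep f) U := f.2.choose_spec.1

lemma rep_apply (f : holo U) (ζ : U) : (rep f) ζ = f.1 ζ := (f.2.choose_spec.2 ζ).symm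

lemma of_rep (f : holo U) : of (rep f) (rep_diff f) = f := Subtype.ext (funext (rep_apply f))

lemma of_inj {g h : ℂ → ℂ} (hg : DifferentiableOn ℂ g U) (hh : DifferentiableOn ℂ h U) :
    of g hg = of h hh ↔ Set.EqOn g h U :=
  ⟨fun e ζ hζ => congrFun (congrArg Subtype.val e) ⟨ζ, hζ⟩,
    fun e => Subtype.ext (funext fun ζ => e ζ.2)⟩

lemma rep_of {g : ℂ → ℂ} (hg : DifferentiableOn ℂ g U) : Set.EqOn (rep (of g hg)) g U :=
  fun ζ hζ => rep_apply (of g hg) ⟨ζ, hζ⟩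

/-- Complex differentiation as a derivation of the ring of holomorphic functions. Openness of `U`
makes the derivative at points of `U` independent of the values outside `U`. -/
noncomputable def d (hU : IsOpen U) : Derivation ℂ (holo U) (holo U) :=
  have hd : ∀ (f : holo U) (ζ : U), DifferentiableAt ℂ (rep f) ζ := fun f ζ =>
    (rep_diff f).differentiableAt (hU.mem_nhds ζ.2)
  Derivation.mk'
    { toFun := fun f => of (deriv (rep f)) ((rep_diff f).deriv hU)
      map_add' := fun f g => (Subtype.ext (funext fun ζ => by
        have h : Set.EqOn (rep (f + g)) ((rep f) + (rep g)) U := fun ζ hζ => by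
          simp [rep_apply _ ⟨ζ, hζ⟩]
        exact (h.deriv hU ζ.2).trans (deriv_add (hd f ζ) (hd g ζ))))
      map_smul' := fun c f => (Subtype.ext (funext fun ζ => by
        have h : Set.EqOn (rep (c • f)) (c • (rep f)) U := fun ζ hζ => by
          simp [rep_apply _ ⟨ζ, hζ⟩]
        exact (h.deriv hU ζ.2).trans (deriv_const_smul c (hd f ζ)))) }
    fun f g => (Subtype.ext (funext fun ζ => by
        have h : Set.EqOn (rep (f * g)) ((rep f) * (rep g)) U := fun ζ hζ => by
          simp [rep_apply _ ⟨ζ, hζ⟩]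
        refine (h.deriv hU ζ.2).trans ((deriv_mul (hd f ζ) (hd g ζ)).trans ?_)
        rw [rep_apply, rep_apply]
        exact (add_comm _ _).trans (congrArg (f.1 ζ * deriv (rep g) ζ + ·) (mul_comm _ _))))

lemma d_of (hU : IsOpen U) {g : ℂ → ℂ} (hg : DifferentiableOn ℂ g U) :
    d hU (of g hg) = of (deriv g) (hg.deriv hU) :=
  (of_inj ((rep_diff _).deriv hU) _).2 ((rep_of hg).deriv hU)

lemma isDomain (hU : IsOpen U) (hc : IsConnected U) : IsDomain (holo U) := by
  obtain ⟨ζ, hζ⟩ := hc.nonempty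
  have : Nontrivial (holo U) := ⟨0, 1, fun h => by
    have := congrFun (congrArg Subtype.val h) ⟨ζ, hζ⟩
    exact zero_ne_one this⟩
  have : NoZeroDivisors (holo U) := ⟨fun {f g} h => by
    have h0 := AnalyticOnNhd.eq_zero_or_eq_zero_of_mul_eq_zero
      ((rep_diff f).analyticOnNhd hU) ((rep_diff g).analyticOnNhd hU)
      (fun ζ hζ => by
        have := congrFun (congrArg Subtype.val h) ⟨ζ, hζ⟩
        rw [rep_apply f ⟨ζ, hζ⟩, rep_apply g ⟨ζ, hζ⟩]
        exact this) hc.isPreconnected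
    rcases h0 with h0 | h0
    · exact Or.inl (Subtype.ext (funext fun ζ => (rep_apply f ζ).symm.trans (h0 ζ ζ.2)))
    · exact Or.inr (Subtype.ext (funext fun ζ => (rep_apply g ζ).symm.trans (h0 ζ ζ.2)))⟩
  exact NoZeroDivisors.to_isDomain _

/-- Two holomorphic functions on a connected open set with vanishing Wronskian are proportional: the
quotient is constant near a point where `g ≠ 0`, and the identity theorem spreads the relation. -/
lemma eq_smul_of_wronskian (hU : IsOpen U) (hc : IsConnected U) {f g : holo U} (hg : g ≠ 0)
    (h : d hU f * g = f * d hU g) : ∃ c : ℂ, f = c • g := by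
  obtain ⟨⟨ζ₀, hζ₀⟩, hgζ⟩ : ∃ ζ : U, g.1 ζ ≠ 0 := by
    by_contra! h0
    exact hg (Subtype.ext (funext h0))
  have hgc : ContinuousAt (rep g) ζ₀ :=
    ((rep_diff g).differentiableAt (hU.mem_nhds hζ₀)).continuousAt
  have hev : ∀ᶠ ζ in nhds ζ₀, ζ ∈ U ∧ (rep g) ζ ≠ 0 := by
    refine Filter.Eventually.and (hU.mem_nhds hζ₀) (hgc.eventually_ne ?_)
    rwa [rep_apply g ⟨ζ₀, hζ₀⟩]
  obtain ⟨r, hr, hball⟩ := Metric.eventually_nhds_iff_ball.1 hev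
  have hf' : ∀ ζ ∈ Metric.ball ζ₀ r, DifferentiableAt ℂ (rep f) ζ := fun ζ hζ =>
    (rep_diff f).differentiableAt (hU.mem_nhds (hball ζ hζ).1)
  have hg' : ∀ ζ ∈ Metric.ball ζ₀ r, DifferentiableAt ℂ (rep g) ζ := fun ζ hζ =>
    (rep_diff g).differentiableAt (hU.mem_nhds (hball ζ hζ).1)
  have hw : ∀ ζ ∈ Metric.ball ζ₀ r, deriv (rep f) ζ * (rep g) ζ = (rep f) ζ * deriv (rep g) ζ := by
    intro ζ hζ
    have hζU := (hball ζ hζ).1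
    rw [rep_apply f ⟨ζ, hζU⟩, rep_apply g ⟨ζ, hζU⟩]
    exact congrFun (congrArg Subtype.val h) ⟨ζ, hζU⟩
  obtain ⟨c, hcc⟩ := Metric.isOpen_ball.exists_is_const_of_deriv_eq_zero
    (convex_ball ζ₀ r).isPreconnected (f := (rep f) / (rep g))
    (fun ζ hζ => ((hf' ζ hζ).div (hg' ζ hζ) (hball ζ hζ).2).differentiableWithinAt)
    (fun ζ hζ => by
      rw [deriv_div (hf' ζ hζ) (hg' ζ hζ) (hball ζ hζ).2, hw ζ hζ]
      simp)
  refine ⟨c, ?_⟩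
  have hEq : Set.EqOn (rep f) (c • (rep g)) U := by
    refine ((rep_diff f).analyticOnNhd hU).eqOn_of_preconnected_of_eventuallyEq
      (((rep_diff g).const_smul c).analyticOnNhd hU) hc.isPreconnected hζ₀ ?_
    filter_upwards [Metric.ball_mem_nhds ζ₀ hr] with ζ hζ
    have := hcc ζ hζ
    rw [Pi.div_apply, div_eq_iff (hball ζ hζ).2] at this
    exact this
  refine Subtype.ext (funext fun ζ => ?_)
  rw [← rep_apply, hEq ζ.2, Pi.smul_apply, rep_apply]
  rfl

/-- The ring of holomorphic functions embeds, compatibly with differentiation, in a field (its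
fraction field) with a derivation whose only constants are the complex numbers. -/
lemma exists_field (hU : IsOpen U) (hc : IsConnected U) :
    ∃ (M : Type) (_ : Field M) (_ : Algebra ℂ M) (D : Derivation ℂ M M) (Φ : holo U →ₐ[ℂ] M),
      Function.Injective Φ ∧ (∀ f, D (Φ f) = Φ (d hU f)) ∧
      ∀ m, D m = 0 → ∃ c : ℂ, algebraMap ℂ M c = m := by
  have := isDomain hU hc
  let M := FractionRing (holo U)
  have : Algebra.FormallyEtale (holo U) M :=
    Algebra.FormallyEtale.of_isLocalization (nonZeroDivisors (holo U))
  let Φ : holo U →ₐ[ℂ] M := IsScalarTower.toAlgHom ℂ (holo U) M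
  have hΦ : Function.Injective Φ := IsFractionRing.injective (holo U) M
  obtain ⟨D, hD⟩ := exists_extend ((Algebra.linearMap (holo U) M).compDer (d hU))
  have hD : ∀ f, D (Φ f) = Φ (d hU f) := hD
  refine ⟨M, inferInstance, inferInstance, D, Φ, hΦ, hD, fun m hm => ?_⟩
  obtain ⟨f, g, hg, rfl⟩ := IsFractionRing.div_surjective (A := holo U) m
  have hg0 : g ≠ 0 := nonZeroDivisors.ne_zero hg
  change D (Φ f / Φ g) = 0 at hm
  have hg1 : Φ g ≠ 0 := fun h => hg0 (hΦ (h.trans (map_zero Φ).symm))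
  rw [Derivation.leibniz_div, hD, hD] at hm
  simp only [smul_eq_mul, mul_eq_zero, pow_eq_zero_iff two_ne_zero, inv_eq_zero, hg1, false_or] at hm
  obtain ⟨c, rfl⟩ := eq_smul_of_wronskian hU hc hg0 (f := f) (hΦ (by
    rw [map_mul, map_mul]
    linear_combination hm))
  refine ⟨c, ?_⟩
  change _ = Φ (c • g) / Φ g
  rw [map_smul, Algebra.smul_def, mul_div_cancel_right₀ _ hg1]

end holo

/-! ### Kepler's equation -/

lemma deriv_kepler {U : Set ℂ} (hU : IsOpen U) {W : ℂ → ℂ} (hW : DifferentiableOn ℂ W U)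
    (hk : ∀ ζ ∈ U, W ζ - Complex.sin (W ζ) = ζ) {ζ : ℂ} (hζ : ζ ∈ U) :
    (1 - Complex.cos (W ζ)) * deriv W ζ = 1 := by
  have h1 := (hW.differentiableAt (hU.mem_nhds hζ)).hasDerivAt
  have h2 : HasDerivAt (fun ζ => W ζ - Complex.sin (W ζ)) 1 ζ := by
    refine (hasDerivAt_id ζ).congr_of_eventuallyEq ?_
    filter_upwards [hU.mem_nhds hζ] with ξ hξ using hk ξ hξ
  have := (h1.sub h1.csin).unique h2
  linear_combination this

lemma exp_ode {U : Set ℂ} (hU : IsOpen U) {W : ℂ → ℂ} (hW : DifferentiableOn ℂ W U)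
    (hk : ∀ ζ ∈ U, W ζ - Complex.sin (W ζ) = ζ) {ζ : ℂ} (hζ : ζ ∈ U) :
    (Complex.exp (Complex.I * W ζ) - 1) ^ 2 * deriv (fun ζ => Complex.exp (Complex.I * W ζ)) ζ
      = -2 * Complex.I * Complex.exp (Complex.I * W ζ) ^ 2 := by
  have h1 := (hW.differentiableAt (hU.mem_nhds hζ)).hasDerivAt
  rw [((h1.const_mul Complex.I).cexp).deriv]
  have h2 := deriv_kepler hU hW hk hζ
  rw [Complex.cos, neg_mul, Complex.exp_neg, mul_comm (W ζ)] at h2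
  have h3 := Complex.exp_ne_zero (Complex.I * W ζ)
  field_simp at h2
  linear_combination (-Complex.I * Complex.exp (Complex.I * W ζ)) * h2

/-- Kepler's equation as a relation between `ζ`, `w` and `t = exp (I w)`: `t - t⁻¹ = 2 I (w - ζ)`. -/
lemma exp_quadratic {w ζ : ℂ} (hk : w - Complex.sin w = ζ) :
    Complex.exp (Complex.I * w) ^ 2 - 2 * Complex.I * (w - ζ) * Complex.exp (Complex.I * w) - 1
      = 0 := by
  have h : w - ζ = Complex.sin w := by linear_combination hk
  rw [h, Complex.sin, neg_mul, Complex.exp_neg, mul_comm w]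
  have h3 := Complex.exp_ne_zero (Complex.I * w)
  field_simp
  linear_combination (Complex.exp (Complex.I * w) ^ 2 - 1) * Complex.I_sq

/-- Two solutions satisfy `exp (I V) exp (I W) ≠ 1` somewhere: otherwise `sin V + sin W = 0`, so
`V + W = 2 ζ` and `exp (2 I ζ)` would be identically `1`. -/
lemma exp_mul_ne_one {U : Set ℂ} (hU : IsOpen U) (hUc : IsConnected U) {V W : ℂ → ℂ}
    (hkV : ∀ ζ ∈ U, V ζ - Complex.sin (V ζ) = ζ) (hkW : ∀ ζ ∈ U, W ζ - Complex.sin (W ζ) = ζ)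
    (h : ∀ ζ ∈ U, Complex.exp (Complex.I * V ζ) * Complex.exp (Complex.I * W ζ) = 1) : False := by
  obtain ⟨ζ, hζ⟩ := hUc.nonempty
  have hsum : ∀ ξ ∈ U, Complex.exp (Complex.I * (2 * ξ)) = 1 := by
    intro ξ hξ
    have h1 := h ξ hξ
    have h2 : Complex.sin (V ξ) + Complex.sin (W ξ) = 0 := by
      have h5 := Complex.exp_ne_zero (Complex.I * V ξ)
      have h6 : Complex.exp (Complex.I * W ξ) = (Complex.exp (Complex.I * V ξ))⁻¹ := by
        field_simp
        linear_combination h1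
      rw [Complex.sin, Complex.sin, neg_mul, neg_mul, Complex.exp_neg, Complex.exp_neg,
        mul_comm (V ξ), mul_comm (W ξ), h6, inv_inv]
      ring
    have h3 : 2 * ξ = V ξ + W ξ := by
      linear_combination -hkV ξ hξ - hkW ξ hξ - h2
    rw [h3, mul_add, Complex.exp_add, h1]
  have h1 : HasDerivAt (fun ξ : ℂ => Complex.exp (Complex.I * (2 * ξ))) 0 ζ := by
    refine (hasDerivAt_const ζ (1 : ℂ)).congr_of_eventuallyEq ?_
    filter_upwards [hU.mem_nhds hζ] with ξ hξ using hsum ξ hξ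
  have h2 := (((hasDerivAt_id ζ).const_mul (2 : ℂ)).const_mul Complex.I).cexp.unique h1
  simp [Complex.exp_ne_zero] at h2

theorem stmt14 (U : Set ℂ) (hUo : IsOpen U) (hUc : IsConnected U)
    {n : ℕ} (W : Fin n → (ℂ → ℂ))
    (hdiff : ∀ i, DifferentiableOn ℂ (W i) U)
    (hkepler : ∀ i, ∀ ζ ∈ U, W i ζ - Complex.sin (W i ζ) = ζ)
    (hdistinct : ∀ i j, i ≠ j → ¬ Set.EqOn (W i) (W j) U) :
    ∀ P : MvPolynomial (Fin (n + 1)) ℂ, P ≠ 0 →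
      ¬ ∀ ζ ∈ U, MvPolynomial.eval (Fin.cons ζ fun i => W i ζ) P = 0 := by
  obtain ⟨M, _, _, D, Φ, hΦ, hD, hconst⟩ := holo.exists_field hUo hUc
  let z : holo U := holo.of id differentiableOn_id
  let w : Fin n → holo U := fun i => holo.of (W i) (hdiff i)
  let t : Fin n → holo U := fun i => holo.of (fun ζ => Complex.exp (Complex.I * W i ζ))
    ((hdiff i).const_mul Complex.I).cexp
  have hext : ∀ {f g : holo U}, (∀ ζ : U, f.1 ζ = g.1 ζ) → f = g := fun h => Subtype.ext (funext h)
  have hcΦ : ∀ c : ℂ, algebraMap ℂ M c = Φ (algebraMap ℂ (holo U) c) := fun c => (Φ.commutes c).symm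
  have hind := algebraicIndependent_of_ode D hconst (z := Φ z) (k := -2 * Complex.I)
    (t := fun i => Φ (t i)) (w := fun i => Φ (w i))
    (by
      rw [hD, holo.d_of, ← map_one Φ]
      exact congrArg Φ (hext fun ζ => deriv_id _))
    (mul_ne_zero (by norm_num) Complex.I_ne_zero)
    (fun i h => by
      obtain ⟨ζ, hζ⟩ := hUc.nonempty
      exact Complex.exp_ne_zero _
        (congrFun (congrArg Subtype.val (hΦ (h.trans (map_zero Φ).symm))) ⟨ζ, hζ⟩))
    (fun i => by
      rw [hD, holo.d_of, hcΦ, ← map_one Φ, ← map_sub, ← map_pow, ← map_pow, ← map_mul, ← map_mul]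
      exact congrArg Φ (hext fun ζ => exp_ode hUo (hdiff i) (hkepler i) ζ.2))
    (fun i j hij h => hdistinct i j hij fun ζ hζ => by
      have h1 : Complex.exp (Complex.I * W i ζ) = Complex.exp (Complex.I * W j ζ) :=
        congrFun (congrArg Subtype.val (hΦ h)) ⟨ζ, hζ⟩
      have h2 : Complex.sin (W i ζ) = Complex.sin (W j ζ) := by
        rw [Complex.sin, Complex.sin, neg_mul, neg_mul, Complex.exp_neg, Complex.exp_neg,
          mul_comm (W i ζ), mul_comm (W j ζ), h1]
      linear_combination hkepler i ζ hζ - hkepler j ζ hζ + h2)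
    (fun i j hij h => exp_mul_ne_one hUo hUc (hkepler i) (hkepler j)
      fun ζ hζ => by
        rw [← map_mul, ← map_one Φ] at h
        exact congrFun (congrArg Subtype.val (hΦ h)) ⟨ζ, hζ⟩)
    (fun i => by
      rw [hcΦ, ← map_sub, ← map_mul, ← map_mul, ← map_pow, ← map_sub, ← map_one Φ, ← map_sub,
        ← map_zero Φ]
      exact congrArg Φ (hext fun ζ => exp_quadratic (hkepler i ζ ζ.2)))
  have hind' := hind.comp (finSuccEquiv n) (finSuccEquiv n).injective
  let G : Fin (n + 1) → holo U := Fin.cons z w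
  have hG : (fun o : Option (Fin n) => o.elim (Φ z) fun i => Φ (w i)) ∘ finSuccEquiv n = Φ ∘ G := by
    funext i
    refine Fin.cases ?_ (fun i => ?_) i <;> simp [G]
  rw [hG] at hind'
  have hGP : ∀ P : MvPolynomial (Fin (n + 1)) ℂ, ∀ ζ : U,
      (MvPolynomial.aeval G P : holo U).1 ζ
        = MvPolynomial.eval (Fin.cons ζ.1 fun i => W i ζ) P := by
    intro P ζ
    have h1 := MvPolynomial.comp_aeval_apply (f := G)
      ((Pi.evalAlgHom ℂ (fun _ : U => ℂ) ζ).comp (holo U).val) P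
    rw [show (fun i => ((Pi.evalAlgHom ℂ (fun _ : U => ℂ) ζ).comp (holo U).val) (G i))
      = Fin.cons ζ.1 fun i => W i ζ from
        funext fun i => Fin.cases rfl (fun _ => rfl) i, MvPolynomial.aeval_eq_eval] at h1
    exact h1
  intro P hP h
  refine hP (hind'.eq_zero_of_aeval_eq_zero P ?_)
  have h0 : (MvPolynomial.aeval G P : holo U) = 0 := hext fun ζ => (hGP P ζ).trans (h ζ ζ.2)
  have h1 := MvPolynomial.comp_aeval_apply (f := G) Φ P
  rw [h0, map_zero] at h1
  exact h1.symm
end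

section
/- Let U ⊆ ℂ be a nonempty connected open set and let w₁, w₂ : U → ℂ be holomorphic functions satisfying Lambert's equation wⱼ(ζ)·exp(wⱼ(ζ)) = ζ for all ζ ∈ U and j = 1, 2. If there exist nonzero rational numbers q₁, q₂ and a complex number c such that q₁·w₁(ζ) + q₂·w₂(ζ) = c for all ζ ∈ U, then c = 0, q₁ = −q₂ and w₁ = w₂ on U. -/
/-!
Differentiating `w * exp w = ζ` gives `ζ * deriv w * (1 + w) = w`. Differentiating the linear relation
and eliminating the derivatives then yields the algebraic relation `c + (q₁ + q₂) * w₁ * w₂ = 0`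
on `U`. If `q₁ + q₂ ≠ 0`, substituting `w₂ = (c - q₁ * w₁) / q₂` shows that `w₁` takes values among
the roots of a fixed genuine quadratic, hence finitely many; but `ζ` is recovered from `w₁ ζ`
and `U` is infinite. So `q₁ + q₂ = 0`, whence `c = 0` and `w₁ = w₂`.
-/

open Complex

/-- Multiplying the differentiated Lambert equation by `w` removes the exponential. -/
theorem lambert_deriv {U : Set ℂ} (hUo : IsOpen U) {w : ℂ → ℂ} (hd : DifferentiableOn ℂ w U)
    (hl : ∀ ζ ∈ U, w ζ * Complex.exp (w ζ) = ζ) {ζ : ℂ} (hζ : ζ ∈ U) :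
    ζ * deriv w ζ * (1 + w ζ) = w ζ := by
  have hw : HasDerivAt w (deriv w ζ) ζ := (hd.differentiableAt (hUo.mem_nhds hζ)).hasDerivAt
  have h1 := hw.mul hw.cexp
  have h2 : HasDerivAt (fun z => w z * Complex.exp (w z)) 1 ζ :=
    (hasDerivAt_id ζ).congr_of_eventuallyEq
      (Filter.eventually_of_mem (hUo.mem_nhds hζ) hl)
  have h3 := h1.unique h2
  have h4 := hl ζ hζ
  linear_combination w ζ * h3 - deriv w ζ * (1 + w ζ) * h4

/-!
STATEMENT 15: If two holomorphic solutions `w₁, w₂` of Lambert's equation on a domain `U`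
satisfy a relation `q₁·w₁ + q₂·w₂ = c` with `q₁, q₂ ∈ ℚ` nonzero and `c ∈ ℂ`, then
`c = 0`, `q₁ = −q₂` and `w₁ = w₂` on `U`.
-/

theorem stmt15 (U : Set ℂ) (hUo : IsOpen U) (hUc : IsConnected U)
    (w₁ w₂ : ℂ → ℂ)
    (hdiff₁ : DifferentiableOn ℂ w₁ U) (hdiff₂ : DifferentiableOn ℂ w₂ U)
    (hl₁ : ∀ ζ ∈ U, w₁ ζ * Complex.exp (w₁ ζ) = ζ)
    (hl₂ : ∀ ζ ∈ U, w₂ ζ * Complex.exp (w₂ ζ) = ζ)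
    (q₁ q₂ : ℚ) (hq₁ : q₁ ≠ 0) (hq₂ : q₂ ≠ 0) (c : ℂ)
    (hrel : ∀ ζ ∈ U, (q₁ : ℂ) * w₁ ζ + (q₂ : ℂ) * w₂ ζ = c) :
    c = 0 ∧ q₁ = -q₂ ∧ Set.EqOn w₁ w₂ U := by
  -- Eliminating the derivatives needs only `1 + wⱼ` as multipliers, so `ζ = 0` is no exception.
  have key : ∀ ζ ∈ U, c + ((q₁ : ℂ) + q₂) * (w₁ ζ * w₂ ζ) = 0 := by
    intro ζ hζ
    have e1 := lambert_deriv hUo hdiff₁ hl₁ hζ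
    have e2 := lambert_deriv hUo hdiff₂ hl₂ hζ
    have hw1 := (hdiff₁.differentiableAt (hUo.mem_nhds hζ)).hasDerivAt
    have hw2 := (hdiff₂.differentiableAt (hUo.mem_nhds hζ)).hasDerivAt
    have h1 := (hw1.const_mul (q₁ : ℂ)).add (hw2.const_mul (q₂ : ℂ))
    have h2 : HasDerivAt (fun z => (q₁ : ℂ) * w₁ z + (q₂ : ℂ) * w₂ z) 0 ζ :=
      (hasDerivAt_const ζ c).congr_of_eventuallyEq
        (Filter.eventually_of_mem (hUo.mem_nhds hζ) hrel)
    have h3 := h1.unique h2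
    linear_combination -hrel ζ hζ - (q₁ : ℂ) * (1 + w₂ ζ) * e1 - (q₂ : ℂ) * (1 + w₁ ζ) * e2
      + ζ * (1 + w₁ ζ) * (1 + w₂ ζ) * h3
  obtain ⟨ζ₀, hζ₀⟩ := hUc.nonempty
  have hq₁c : (q₁ : ℂ) ≠ 0 := by exact_mod_cast hq₁
  have hq₂c : (q₂ : ℂ) ≠ 0 := by exact_mod_cast hq₂
  have hsum : (q₁ : ℂ) + q₂ = 0 := by
    by_contra hs
    let P : Polynomial ℂ := Polynomial.C (-((q₁ : ℂ) + q₂) * q₁) * Polynomial.X ^ 2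
      + Polynomial.C (((q₁ : ℂ) + q₂) * c) * Polynomial.X + Polynomial.C (c * q₂)
    have hP : P ≠ 0 := by
      intro h0
      have hdeg : P.natDegree = 2 :=
        Polynomial.natDegree_quadratic (mul_ne_zero (neg_ne_zero.mpr hs) hq₁c)
      simp [h0] at hdeg
    have hfin : {x | P.IsRoot x}.Finite := Polynomial.finite_setOfPred_isRoot hP
    refine infinite_of_mem_nhds ζ₀ (hUo.mem_nhds hζ₀)
      ((hfin.image fun x => x * Complex.exp x).subset ?_)
    intro ζ hζ
    refine ⟨w₁ ζ, ?_, hl₁ ζ hζ⟩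
    simp only [P, Set.mem_ofPred_eq, Polynomial.IsRoot.def, Polynomial.eval_add,
      Polynomial.eval_mul, Polynomial.eval_C, Polynomial.eval_pow, Polynomial.eval_X]
    linear_combination (q₂ : ℂ) * key ζ hζ - ((q₁ : ℂ) + q₂) * w₁ ζ * hrel ζ hζ
  have hc : c = 0 := by
    have h := key ζ₀ hζ₀
    rwa [hsum, zero_mul, add_zero] at h
  refine ⟨hc, eq_neg_of_add_eq_zero_left (by exact_mod_cast hsum), fun ζ hζ => ?_⟩
  apply mul_left_cancel₀ hq₁c
  linear_combination hrel ζ hζ + hc - w₂ ζ * hsum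
end

section
/- Let U ⊆ ℂ be a nonempty connected open set and let w₁, w₂ : U → ℂ be holomorphic functions satisfying Kepler's equation wⱼ(ζ) − sin(wⱼ(ζ)) = ζ for all ζ ∈ U and j = 1, 2. Assume that w₁ is transcendental over ℂ(z), i.e. no nonzero polynomial P ∈ ℂ[X, Y] satisfies P(ζ, w₁(ζ)) = 0 for all ζ ∈ U. If there exist nonzero rational numbers q₁, q₂ and a complex number c such that q₁·w₁(ζ) + q₂·w₂(ζ) = c for all ζ ∈ U, then c = 0, q₁ = −q₂ and w₁ = w₂ on U. -/
open Complex

/-!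
Put `a = -q₁/q₂` and `b = c/q₂`, so that `w₂ = a w₁ + b`. Subtracting the two Kepler equations
shows that the entire function `F(z) = (a z + b - sin (a z + b)) - (z - sin z)` vanishes on the
range of `w₁`. Kepler's equation makes `w₁` injective, and it is continuous, so its range has an
accumulation point in itself and `F` vanishes identically by the identity theorem.
Evaluating `F` at `0` and at `2π·den a`, which changes neither sine, gives `a = 1`; evaluating at
`0` and `π` then gives `b = sin b = -sin b`, so `b = 0`.
-/

/-- An affine map with rational slope preserving `z - sin z` on all of `ℂ` is the identity.
Rationality of the slope makes `2π·den a` a common period of both sines. -/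
lemma affine_eq_id_of_kepler (a : ℚ) (b : ℂ)
    (h : ∀ z : ℂ, (a * z + b) - Complex.sin (a * z + b) = z - Complex.sin z) :
    a = 1 ∧ b = 0 := by
  have h0 := h 0
  have hN := h ((a.den : ℕ) * (2 * Real.pi))
  have hden : (a : ℂ) * (a.den : ℂ) = (a.num : ℂ) := by
    exact_mod_cast Rat.mul_den_eq_num a
  have e1 : (a : ℂ) * ((a.den : ℕ) * (2 * Real.pi)) + b = b + (a.num : ℂ) * (2 * Real.pi) := by
    rw [← hden]; ring
  have s1 := Complex.sin_add_int_mul_two_pi b a.num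
  have s2 : Complex.sin ((a.den : ℂ) * (2 * Real.pi)) = 0 := by
    simpa using Complex.sin_add_nat_mul_two_pi 0 a.den
  rw [e1, s1, s2] at hN
  simp only [mul_zero, zero_add, Complex.sin_zero, sub_zero] at h0 hN
  have hpi : (Real.pi : ℂ) ≠ 0 := by exact_mod_cast Real.pi_ne_zero
  have hd : (a.den : ℂ) ≠ 0 := by exact_mod_cast a.den_nz
  have ha' : (a : ℂ) = 1 := by
    have : ((a : ℂ) - 1) * ((a.den : ℂ) * (2 * Real.pi)) = 0 := by
      linear_combination hN - h0 + (2 * Real.pi) * hden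
    have hne : (a.den : ℂ) * (2 * Real.pi) ≠ 0 := mul_ne_zero hd (mul_ne_zero two_ne_zero hpi)
    exact sub_eq_zero.mp ((mul_eq_zero.mp this).resolve_right hne)
  have ha : a = 1 := by exact_mod_cast ha'
  refine ⟨ha, ?_⟩
  have hp := h Real.pi
  rw [ha', one_mul, add_comm, Complex.sin_add_pi, Complex.sin_pi] at hp
  linear_combination (h0 + hp) / 2

/-!
STATEMENT 16: If two holomorphic solutions `w₁, w₂` of Kepler's equation on a domain `U`,
with `w₁` transcendental over `ℂ(z)`, satisfy a relation `q₁·w₁ + q₂·w₂ = c` with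
`q₁, q₂ ∈ ℚ` nonzero and `c ∈ ℂ`, then `c = 0`, `q₁ = −q₂` and `w₁ = w₂` on `U`.
-/

theorem stmt16 (U : Set ℂ) (hUo : IsOpen U) (hUc : IsConnected U)
    (w₁ w₂ : ℂ → ℂ)
    (hdiff₁ : DifferentiableOn ℂ w₁ U) (hdiff₂ : DifferentiableOn ℂ w₂ U)
    (hk₁ : ∀ ζ ∈ U, w₁ ζ - Complex.sin (w₁ ζ) = ζ)
    (hk₂ : ∀ ζ ∈ U, w₂ ζ - Complex.sin (w₂ ζ) = ζ)
    -- w₁ is transcendental over ℂ(z):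
    (htrans : ∀ P : MvPolynomial (Fin 2) ℂ,
      (∀ ζ ∈ U, MvPolynomial.eval ![ζ, w₁ ζ] P = 0) → P = 0)
    (q₁ q₂ : ℚ) (hq₁ : q₁ ≠ 0) (hq₂ : q₂ ≠ 0) (c : ℂ)
    (hrel : ∀ ζ ∈ U, (q₁ : ℂ) * w₁ ζ + (q₂ : ℂ) * w₂ ζ = c) :
    c = 0 ∧ q₁ = -q₂ ∧ Set.EqOn w₁ w₂ U := by
  obtain ⟨ζ₀, hζ₀⟩ := hUc.nonempty
  have hq₂' : (q₂ : ℂ) ≠ 0 := by exact_mod_cast hq₂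
  have hw : ∀ ζ ∈ U, w₂ ζ = ((-q₁ / q₂ : ℚ) : ℂ) * w₁ ζ + c / q₂ := by
    intro ζ hζ
    push_cast
    field_simp
    linear_combination hrel ζ hζ
  have key : ∀ z : ℂ, (((-q₁ / q₂ : ℚ) : ℂ) * z + c / q₂)
      - Complex.sin (((-q₁ / q₂ : ℚ) : ℂ) * z + c / q₂) = z - Complex.sin z := by
    set a : ℂ := ((-q₁ / q₂ : ℚ) : ℂ)
    set b : ℂ := c / q₂
    have hf : AnalyticOnNhd ℂ (fun z : ℂ => (a * z + b) - Complex.sin (a * z + b)) Set.univ :=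
      DifferentiableOn.analyticOnNhd (by fun_prop) isOpen_univ
    have hg : AnalyticOnNhd ℂ (fun z : ℂ => z - Complex.sin z) Set.univ :=
      DifferentiableOn.analyticOnNhd (by fun_prop) isOpen_univ
    have hU : ∀ᶠ ζ in nhdsWithin ζ₀ {ζ₀}ᶜ, ζ ∈ U :=
      nhdsWithin_le_nhds (hUo.mem_nhds hζ₀)
    -- Injectivity of `w₁` lets punctured neighbourhoods be pushed forward.
    have ht : Filter.Tendsto w₁ (nhdsWithin ζ₀ {ζ₀}ᶜ) (nhdsWithin (w₁ ζ₀) {w₁ ζ₀}ᶜ) := by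
      refine tendsto_nhdsWithin_iff.mpr ⟨?_, ?_⟩
      · exact (hdiff₁.continuousOn.continuousAt (hUo.mem_nhds hζ₀)).tendsto.mono_left
          nhdsWithin_le_nhds
      · filter_upwards [hU, self_mem_nhdsWithin] with ζ hζ hne heq
        have heq' : w₁ ζ = w₁ ζ₀ := heq
        exact hne (by rw [Set.mem_singleton_iff, ← hk₁ ζ hζ, heq', hk₁ ζ₀ hζ₀])
    have hfreq : ∃ᶠ z in nhdsWithin (w₁ ζ₀) {w₁ ζ₀}ᶜ,
        (a * z + b) - Complex.sin (a * z + b) = z - Complex.sin z := by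
      refine ht.frequently (Filter.Eventually.frequently ?_)
      filter_upwards [hU] with ζ hζ
      rw [← hw ζ hζ, hk₁ ζ hζ, hk₂ ζ hζ]
    exact fun z => congrFun (hf.eq_of_frequently_eq hg hfreq) z
  obtain ⟨ha, hb⟩ := affine_eq_id_of_kepler _ _ key
  refine ⟨(div_eq_zero_iff.mp hb).resolve_right hq₂', ?_, fun ζ hζ => ?_⟩
  · have := (div_eq_one_iff_eq hq₂).mp ha
    linarith
  · rw [hw ζ hζ, ha, hb]
    simp
end
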